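/- Let p₁ ∈ G with CP(p₁) = (p, q) a good pair. Then no point of X ∪ G lies in the open axis-parallel rectangle with corners p and q. -/

import Mathlib

open Finset

attribute [local instance] Classical.propDecidable

/-- A point in the plane: first coordinate is the key, second is the time. -/
abbrev Pt : Type := ℤ × ℤ

/-- `r` lies in the closed axis-parallel rectangle with opposite corners `p` and `q`. -/
def inRect (p q r : Pt) : Prop :=
  min p.1 q.1 ≤ r.1 ∧ r.1 ≤ max p.1 q.1 ∧ min p.2 q.2 ≤ r.2 ∧ r.2 ≤ max p.2 q.2

/-- `r` lies in the open axis-parallel rectangle with opposite corners `p` and `q`. -/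
def inOpenRect (p q r : Pt) : Prop :=
  min p.1 q.1 < r.1 ∧ r.1 < max p.1 q.1 ∧ min p.2 q.2 < r.2 ∧ r.2 < max p.2 q.2

/-- `S` is an arborally satisfied set. -/
def ArbSat (S : Finset Pt) : Prop :=
  ∀ p ∈ S, ∀ q ∈ S, p.1 = q.1 ∨ p.2 = q.2 ∨ ∃ r ∈ S, r ≠ p ∧ r ≠ q ∧ inRect p q r

/-- `X` is the permutation point set `{(σ(t), t) : 1 ≤ t ≤ n}` of some permutation `σ` of
`{1, …, n}`. -/
def IsPermPointSet (n : ℕ) (X : Finset Pt) : Prop :=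
  ∃ σ : Equiv.Perm (Fin n),
    X = Finset.univ.image (fun t : Fin n => ((((σ t : ℕ) : ℤ) + 1, ((t : ℕ) : ℤ) + 1) : Pt))

/-- The points added by GREEDY at time `t`, given the point set `X` and the set `G` of points
added before time `t`: for the point `p` of `X` with time `t` and each point `q` of time `< t`
with a different key such that the rectangle spanned by `p` and `q` contains no other point of
time `< t`, the point `(key q, t)` is added. -/
noncomputable def greedyStep (X G : Finset Pt) (t : ℤ) : Finset Pt :=
  (X.filter (fun p => p.2 = t)).biUnion (fun p =>
    (((X ∪ G).filter (fun s => s.2 < t)).filter (fun q =>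
      q.1 ≠ p.1 ∧ ∀ r ∈ (X ∪ G).filter (fun s => s.2 < t), inRect p q r → r = q)).image
      (fun q => ((q.1, t) : Pt)))

/-- All points added by GREEDY while processing times `1, …, t`. -/
noncomputable def greedyUpTo (X : Finset Pt) : ℕ → Finset Pt
  | 0 => ∅
  | t + 1 => greedyUpTo X t ∪ greedyStep X (greedyUpTo X t) ((t : ℤ) + 1)

/-- The set `G` of points added by GREEDY over the whole execution on a permutation point set
`X` of size `n`. -/
noncomputable def greedyG (n : ℕ) (X : Finset Pt) : Finset Pt := greedyUpTo X n

/-- `OP r` is the point of `X` processed at the time at which `r` was added; for `r ∈ X`,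
`OP r = r`. -/
noncomputable def OP (X : Finset Pt) (r : Pt) : Pt :=
  ((X.filter (fun p => p.2 = r.2)).toList).headI

/-- The first point of `S` above `p`: the point of `S` with the same key as `p`, smaller time,
and the largest such time. -/
noncomputable def firstAbove (S : Finset Pt) (p : Pt) : Pt :=
  (p.1, (((S.filter (fun q => q.1 = p.1 ∧ q.2 < p.2)).image Prod.snd).max).unbotD 0)

/-- The pair `CP(p) = (OP(p), OP(q))` where `q` is the first point of `X ∪ G` above `p`. -/
noncomputable def CP (X G : Finset Pt) (p : Pt) : Pt × Pt :=
  (OP X p, OP X (firstAbove (X ∪ G) p))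

/-- `CP(p) ∈ MMC` (*zig*). -/
def inMMC (X G : Finset Pt) (p : Pt) : Prop :=
  ((CP X G p).1.1 < p.1 ∧ (CP X G p).2.1 < (CP X G p).1.1 ∧ (CP X G p).2.2 < (CP X G p).1.2)
  ∨ (p.1 < (CP X G p).1.1 ∧ (CP X G p).1.1 < (CP X G p).2.1 ∧ (CP X G p).2.2 < (CP X G p).1.2)

/-- `CP(p) ∈ MFC` (*zag*). -/
def inMFC (X G : Finset Pt) (p : Pt) : Prop :=
  ((CP X G p).1.1 < p.1 ∧ p.1 ≤ (CP X G p).2.1 ∧ (CP X G p).2.2 < p.2)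
  ∨ (p.1 < (CP X G p).1.1 ∧ (CP X G p).2.1 ≤ p.1 ∧ (CP X G p).2.2 < p.2)

/-- A pair is good if no point of `X` lies in the open rectangle spanned by it. -/
def IsGoodPair (X : Finset Pt) (pr : Pt × Pt) : Prop :=
  ∀ r ∈ X, ¬ inOpenRect pr.1 pr.2 r

/-- `B` is a block of `X`: the set of points of `X` whose times lie in some interval, whose
keys form a set of consecutive integers; blocks are nonempty. -/
def IsBlock (X B : Finset Pt) : Prop :=
  B.Nonempty ∧ (∃ i j : ℤ, B = X.filter (fun p => i ≤ p.2 ∧ p.2 ≤ j)) ∧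
    ∃ c d : ℤ, B.image Prod.fst = Finset.Icc c d

/-- `Top(B)`: the point of `B` with the smallest time. -/
noncomputable def TopPt (B : Finset Pt) : Pt :=
  ((B.filter (fun p => ∀ q ∈ B, p.2 ≤ q.2)).toList).headI

/-- A decomposition tree of `X`: a rooted tree whose nodes are blocks of `X`, whose root is
`X`, whose leaves are exactly the singleton blocks, and in which the children of every
internal node partition it. -/
structure DecompTree (X : Finset Pt) where
  nodes : Finset (Finset Pt)
  parent : Finset Pt → Finset Pt
  isBlock_nodes : ∀ B ∈ nodes, IsBlock X B
  root_mem : X ∈ nodes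
  parent_mem : ∀ B ∈ nodes, B ≠ X → parent B ∈ nodes
  ssubset_parent : ∀ B ∈ nodes, B ≠ X → B ⊂ parent B
  leaf_iff : ∀ B ∈ nodes, (¬ ∃ C ∈ nodes, C ≠ X ∧ parent C = B) ↔ B.card = 1
  children_partition : ∀ B ∈ nodes, B.card ≠ 1 →
    ∀ x ∈ B, ∃! C, C ∈ nodes ∧ C ≠ X ∧ parent C = B ∧ x ∈ C

/-- The children of a node `B` in a decomposition tree. -/
noncomputable def DecompTree.children {X : Finset Pt} (T : DecompTree X) (B : Finset Pt) :
    Finset (Finset Pt) :=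
  T.nodes.filter (fun C => C ≠ X ∧ T.parent C = B)

/-- `X` is `k`-decomposable: it admits a decomposition tree in which every node has at most
`k` children. -/
def kDecomposable (k : ℕ) (X : Finset Pt) : Prop :=
  ∃ T : DecompTree X, ∀ B ∈ T.nodes, (T.children B).card ≤ k

/-- `RT(p)`: the node of the decomposition tree closest to the root (i.e. containing all
others) among the nodes `B` with `Top(B) = p`. -/
noncomputable def RT {X : Finset Pt} (T : DecompTree X) (p : Pt) : Finset Pt :=
  (((T.nodes.filter (fun B => TopPt B = p)).filter
      (fun B => ∀ C ∈ T.nodes, TopPt C = p → C ⊆ B)).toList).headI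

/-- The points added by GREEDY (`G`) while processing `Top(B)` that lie to the left of
`Top(B)`. -/
noncomputable def leftSet (G B : Finset Pt) : Finset Pt :=
  G.filter (fun s => s.2 = (TopPt B).2 ∧ s.1 < (TopPt B).1)

/-- `Left(B)`: among the points added by GREEDY while processing `Top(B)` with key less than
`key (Top B)`, the one with the largest key (junk if none exists). -/
noncomputable def leftPt (G B : Finset Pt) : Pt :=
  (((leftSet G B).filter (fun s => ∀ r ∈ leftSet G B, r.1 ≤ s.1)).toList).headI

/-- The points added by GREEDY (`G`) while processing `Top(B)` that lie to the right of
`Top(B)`. -/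
noncomputable def rightSet (G B : Finset Pt) : Finset Pt :=
  G.filter (fun s => s.2 = (TopPt B).2 ∧ (TopPt B).1 < s.1)

/-- `Right(B)`: among the points added by GREEDY while processing `Top(B)` with key greater
than `key (Top B)`, the one with the smallest key (junk if none exists). -/
noncomputable def rightPt (G B : Finset Pt) : Pt :=
  (((rightSet G B).filter (fun s => ∀ r ∈ rightSet G B, s.1 ≤ r.1)).toList).headI

theorem IsPermPointSet.eq_of_time_eq {n : ℕ} {X : Finset Pt} (hX : IsPermPointSet n X)
    {x y : Pt} (hx : x ∈ X) (hy : y ∈ X) (h : x.2 = y.2) : x = y := by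
  obtain ⟨σ, rfl⟩ := hX
  simp only [mem_image, mem_univ, true_and] at hx hy
  obtain ⟨a, rfl⟩ := hx
  obtain ⟨b, rfl⟩ := hy
  have hab : a = b := Fin.ext (by simp only at h; omega)
  rw [hab]

theorem greedyUpTo_mono (X : Finset Pt) : Monotone (greedyUpTo X) :=
  monotone_nat_of_le_succ fun _ => subset_union_left

theorem snd_eq_of_mem_greedyStep {X G : Finset Pt} {t : ℤ} {r : Pt}
    (hr : r ∈ greedyStep X G t) : r.2 = t := by
  simp only [greedyStep, mem_biUnion, mem_image] at hr
  obtain ⟨_, _, _, _, rfl⟩ := hr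
  rfl

/-- Points of the final set added at times up to `t` were already present after step `t`. -/
theorem mem_greedyUpTo_of_time_le {X : Finset Pt} {m t : ℕ} {r : Pt}
    (hr : r ∈ greedyUpTo X m) (ht : r.2 ≤ t) : r ∈ greedyUpTo X t := by
  induction m with
  | zero => simp [greedyUpTo] at hr
  | succ k ih =>
    rcases le_or_gt (k + 1) t with hk | hk
    · exact greedyUpTo_mono X hk hr
    · rw [greedyUpTo, mem_union] at hr
      rcases hr with hr | hr
      · exact ih hr
      · have := snd_eq_of_mem_greedyStep hr
        omega

/-- Each added point `r` has a point `x ∈ X` of the same time and a point `w` above it such that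
the rectangle spanned by `x` and `w` contains no other earlier point. -/
theorem exists_witness_of_mem_greedyG {n : ℕ} {X : Finset Pt} {r : Pt}
    (hr : r ∈ greedyG n X) :
    ∃ x ∈ X, x.2 = r.2 ∧ ∃ w ∈ X ∪ greedyG n X, w.1 = r.1 ∧ w.2 < r.2 ∧ r.1 ≠ x.1 ∧
      ∀ s ∈ X ∪ greedyG n X, s.2 < r.2 → inRect x w s → s = w := by
  have key : ∀ m ≤ n, r ∈ greedyUpTo X m →
      ∃ t < n, r ∈ greedyStep X (greedyUpTo X t) ((t : ℤ) + 1) := by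
    intro m hm h
    induction m with
    | zero => simp [greedyUpTo] at h
    | succ k ih =>
      rw [greedyUpTo, mem_union] at h
      rcases h with h | h
      · exact ih (by omega) h
      · exact ⟨k, by omega, h⟩
  obtain ⟨t, ht, h⟩ := key n le_rfl hr
  have hrt := snd_eq_of_mem_greedyStep h
  simp only [greedyStep, mem_biUnion, mem_image, mem_filter] at h
  obtain ⟨x, ⟨hx, hxt⟩, w, ⟨⟨hw, hwt⟩, hne, hempty⟩, rfl⟩ := h
  refine ⟨x, hx, hxt, w, union_subset_union_right (greedyUpTo_mono X ht.le) hw, rfl, hwt, hne,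
    fun s hs hst => hempty s ⟨?_, hst⟩⟩
  rw [mem_union] at hs ⊢
  exact hs.imp_right fun hs => mem_greedyUpTo_of_time_le hs (by simp only at hst; omega)

theorem OP_mem_and_time {X : Finset Pt} {x r : Pt} (hx : x ∈ X) (h : x.2 = r.2) :
    OP X r ∈ X ∧ (OP X r).2 = r.2 := by
  have hmem : x ∈ (X.filter (fun p => p.2 = r.2)).toList := by simp [hx, h]
  have hhead : OP X r ∈ (X.filter (fun p => p.2 = r.2)).toList := by
    unfold OP
    cases hl : (X.filter (fun p => p.2 = r.2)).toList with
    | nil => simp [hl] at hmem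
    | cons a l => simp
  simpa using hhead

theorem firstAbove_eq {S : Finset Pt} {p w : Pt} (hw : w ∈ S) (hkey : w.1 = p.1)
    (htime : w.2 < p.2) (hmax : ∀ s ∈ S, s.1 = p.1 → s.2 < p.2 → s.2 ≤ w.2) :
    firstAbove S p = w := by
  have h : ((S.filter (fun q => q.1 = p.1 ∧ q.2 < p.2)).image Prod.snd).max =
      (w.2 : WithBot ℤ) := by
    apply le_antisymm
    · refine Finset.max_le fun a ha => ?_
      obtain ⟨s, hs, rfl⟩ := mem_image.1 ha
      obtain ⟨hs, hk, ht⟩ := mem_filter.1 hs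
      exact WithBot.coe_le_coe.2 (hmax s hs hk ht)
    · exact Finset.le_max (mem_image.2 ⟨w, mem_filter.2 ⟨hw, hkey, htime⟩, rfl⟩)
  rw [firstAbove, h, ← hkey]
  rfl

/-- Let `p₁ ∈ G` with `CP(p₁) = (p, q)` a good pair (of `MFC`). Then no
point of `X ∪ G` lies in the open axis-parallel rectangle with corners `p` and `q`. -/
theorem good_pair_empty_interior (n : ℕ) (X : Finset Pt) (hX : IsPermPointSet n X)
    (p₁ p q : Pt) (hp₁ : p₁ ∈ greedyG n X)
    (hCP : CP X (greedyG n X) p₁ = (p, q))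
    (hMFC : inMFC X (greedyG n X) p₁)
    (hGood : IsGoodPair X (p, q)) :
    ∀ r ∈ X ∪ greedyG n X, ¬ inOpenRect p q r := by
  obtain ⟨x, hx, hxt, f, hf, hfk, hft, -, hempty⟩ := exists_witness_of_mem_greedyG hp₁
  have hfirst : firstAbove (X ∪ greedyG n X) p₁ = f := by
    refine firstAbove_eq hf hfk hft fun s hs hsk hst => ?_
    by_contra! hlt
    have := hempty s hs hst (by unfold inRect; omega)
    rw [this] at hlt
    exact lt_irrefl _ hlt
  have hp : x = p := by
    obtain ⟨h₁, h₂⟩ := OP_mem_and_time hx hxt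
    have : OP X p₁ = p := congrArg Prod.fst hCP
    rw [← this]
    exact hX.eq_of_time_eq hx h₁ (hxt.trans h₂.symm)
  have hq : q ∈ X ∧ q.2 = f.2 := by
    have : OP X (firstAbove (X ∪ greedyG n X) p₁) = q := congrArg Prod.snd hCP
    rw [← this, hfirst]
    rcases mem_union.1 hf with h | h
    · exact OP_mem_and_time h rfl
    · obtain ⟨y, hy, hyt, -⟩ := exists_witness_of_mem_greedyG h
      exact OP_mem_and_time hy hyt
  obtain ⟨hqX, hqt⟩ := hq
  subst hp
  rw [inMFC, hCP] at hMFC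
  simp only at hMFC
  -- Induct on time: the witness of an earliest point of the rectangle would be no later than `q`.
  suffices H : ∀ (N : ℕ), ∀ r ∈ X ∪ greedyG n X, r.2 < q.2 + N → ¬ inOpenRect x q r by
    intro r hr
    exact H (r.2 - q.2 + 1).toNat r hr (by omega)
  intro N
  induction N with
  | zero => intro r _ hrt hin; unfold inOpenRect at hin; omega
  | succ N ih =>
    intro r hr hrt hin
    have hrG : r ∈ greedyG n X := (mem_union.1 hr).resolve_left fun h => hGood r h hin
    obtain ⟨y, hy, hyt, w, hw, hwk, hwt, -, hwempty⟩ := exists_witness_of_mem_greedyG hrG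
    have hwout := ih w hw (by push_cast at hrt; omega)
    have hyout := hGood y hy
    have hrf : inRect x f r → r = f := hempty r hr (by unfold inOpenRect at hin; omega)
    have hfw := hwempty f hf
    have hqw := hwempty q (mem_union_left _ hqX)
    simp only [inOpenRect, inRect, Prod.ext_iff] at *
    omega
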